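/- Let V be a finite set of vehicles partitioned into stations, let R be a finite set of requests, and for each vehicle v let F_v be a downward-closed family of subsets of R containing ∅ with a cost function c(v, ·) on F_v satisfying c(v, ∅) = 0. Assume vehicles parked at the same station are interchangeable: whenever v and v' belong to the same station, F_v = F_{v'} and c(v, G) = c(v', G) for all G ∈ F_v. For a station s write F_s and c(s, ·) for the common family and cost, and |V_s| for the number of vehicles at s. Then the minimum of Σ_v c(v, g(v)) over all functions g assigning to each vehicle v a group g(v) ∈ F_v such that every request of R lies in exactly one of the sets g(v), equals the minimum of Σ_s Σ_{G ∈ A_s} c(s, G) over all choices of, for each station s, a collection A_s ⊆ F_s of at most |V_s| pairwise disjoint nonempty groups, such that the groups in ⋃_s A_s are pairwise disjoint and their union is R. In particular, generating feasible groups for one representative vehicle per station and allowing up to |V_s| group assignments to that representative preserves the optimal value of the vehicle-group assignment problem. -/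

import Mathlib

theorem station_sum_aux {ρ ν σ : Type*}
    [DecidableEq ρ] [Fintype ν] [Fintype σ] [DecidableEq σ]
    (st : ν → σ) (c : ν → Finset ρ → ℝ) (cst : σ → Finset ρ → ℝ)
    (hcst : ∀ (v : ν) (G : Finset ρ), c v G = cst (st v) G)
    (hc0 : ∀ v : ν, c v ∅ = 0) (g : ν → Finset ρ)
    (hinj : ∀ v w, g v ≠ ∅ → g v = g w → v = w) (A : σ → Finset (Finset ρ))
    (hA : ∀ s, A s = ((Finset.univ.filter fun v : ν => st v = s).filter
      fun v => g v ≠ ∅).image g) :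
    ∑ s : σ, ∑ G ∈ A s, cst s G = ∑ v : ν, c v (g v) := by
  rw [← Finset.sum_fiberwise Finset.univ st]
  refine Finset.sum_congr rfl fun s _ => ?_
  rw [hA, Finset.sum_image]
  · rw [Finset.sum_filter]
    refine Finset.sum_congr rfl fun v hv => ?_
    have hv' : st v = s := by simpa using hv
    split_ifs with h
    · rw [hcst, hv']
    · rw [not_not.mp h, hc0]
  · intro v hv w _ h
    exact hinj v w (Finset.mem_filter.mp hv).2 h


/-- Station symmetry in the vehicle-group assignment problem.  Let the finite vehicle
set `ν` be partitioned into stations by `st : ν → σ`, let `R` be a finite set of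
requests, and for each vehicle `v` let `F v` be a downward-closed family of subsets of
`R` containing `∅`, with cost function `c v` satisfying `c v ∅ = 0`.  Vehicles at the
same station are interchangeable: `F v` and `c v` depend only on the station `st v`,
with common family `Fst s` and cost `cst s` at station `s`.  Then the minimum of
`∑_v c v (g v)` over all assignments `g` of a feasible group to each vehicle such that
every request of `R` lies in exactly one assigned group equals the minimum of
`∑_s ∑_{G ∈ A s} cst s G` over all choices, for each station `s`, of a collection
`A s ⊆ Fst s` of at most `|V_s|` pairwise disjoint nonempty groups such that the groups
in `⋃_s A s` are pairwise disjoint with union `R` (every request lies in exactly one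
group of exactly one station). -/
theorem station_representative_assignment {ρ ν σ : Type*}
    [DecidableEq ρ] [Fintype ν] [Fintype σ] [DecidableEq σ]
    (st : ν → σ) (R : Finset ρ)
    (F : ν → Set (Finset ρ)) (c : ν → Finset ρ → ℝ)
    (Fst : σ → Set (Finset ρ)) (cst : σ → Finset ρ → ℝ)
    (hFst : ∀ v : ν, F v = Fst (st v))
    (hcst : ∀ (v : ν) (G : Finset ρ), c v G = cst (st v) G)
    (hR : ∀ v : ν, ∀ S ∈ F v, S ⊆ R)
    (hdc : ∀ v : ν, ∀ S ∈ F v, ∀ T ⊆ S, T ∈ F v)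
    (hempty : ∀ v : ν, (∅ : Finset ρ) ∈ F v)
    (hc0 : ∀ v : ν, c v ∅ = 0) :
    sInf {x : ℝ | ∃ g : ν → Finset ρ,
        (∀ v : ν, g v ∈ F v) ∧
        (∀ r ∈ R, ∃! v : ν, r ∈ g v) ∧
        ∑ v : ν, c v (g v) = x}
      = sInf {x : ℝ | ∃ A : σ → Finset (Finset ρ),
        (∀ s : σ, ∀ G ∈ A s, G ∈ Fst s ∧ G ≠ ∅) ∧
        (∀ s : σ, (A s).card ≤ (Finset.univ.filter fun v : ν => st v = s).card) ∧
        (∀ s : σ, ∀ G ∈ A s, ∀ G' ∈ A s, G ≠ G' → Disjoint G G') ∧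
        (∀ r ∈ R, ∃! p : σ × Finset ρ, p.2 ∈ A p.1 ∧ r ∈ p.2) ∧
        ∑ s : σ, ∑ G ∈ A s, cst s G = x} := by
  congr 1
  ext x
  constructor
  · rintro ⟨g, hg, hu, rfl⟩
    have hmeet : ∀ v w r, r ∈ g v → r ∈ g w → v = w := fun v w r h1 h2 =>
      (hu r (hR v _ (hg v) h1)).unique h1 h2
    have hinj : ∀ v w, g v ≠ ∅ → g v = g w → v = w := by
      intro v w h1 h2
      obtain ⟨r, hr⟩ := Finset.nonempty_iff_ne_empty.mpr h1
      exact hmeet v w r hr (h2 ▸ hr)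
    have hmem : ∀ s G, G ∈ ((Finset.univ.filter fun v : ν => st v = s).filter
        fun v => g v ≠ ∅).image g ↔ ∃ v, st v = s ∧ g v ≠ ∅ ∧ g v = G := by
      intro s G
      simp [and_assoc]
    refine ⟨fun s => ((Finset.univ.filter fun v : ν => st v = s).filter
      fun v => g v ≠ ∅).image g, ?_, ?_, ?_, ?_, ?_⟩
    · intro s G hG
      obtain ⟨v, rfl, h1, rfl⟩ := (hmem s G).mp hG
      exact ⟨hFst v ▸ hg v, h1⟩
    · intro s
      exact Finset.card_image_le.trans (Finset.card_filter_le _ _)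
    · intro s G hG G' hG' hne
      obtain ⟨v, rfl, h1, rfl⟩ := (hmem s G).mp hG
      obtain ⟨w, h2, h3, rfl⟩ := (hmem _ G').mp hG'
      rw [Finset.disjoint_left]
      intro r hr hr'
      exact hne (by rw [hmeet v w r hr hr'])
    · intro r hr
      obtain ⟨v, hv, -⟩ := hu r hr
      refine ⟨(st v, g v), ⟨(hmem _ _).mpr ⟨v, rfl, ?_, rfl⟩, hv⟩, ?_⟩
      · exact Finset.ne_empty_of_mem hv
      · rintro ⟨s, G⟩ ⟨h1, h2⟩
        obtain ⟨w, h3, h4, h5⟩ := (hmem s G).mp h1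
        simp only at h2
        subst h3 h5
        rw [hmeet v w r hv h2]
    · exact station_sum_aux st c cst hcst hc0 g hinj _ fun s => rfl
  · rintro ⟨A, hA, hcard, -, hu, rfl⟩
    have he : ∀ s, Nonempty ({G // G ∈ A s} ↪ {v : ν // st v = s}) := by
      intro s
      apply Function.Embedding.nonempty_of_card_le
      rw [Fintype.card_coe, Fintype.card_subtype]
      exact hcard s
    have e := fun s => (he s).some
    classical
    let g : ν → Finset ρ := fun v =>
      if h : ∃ G : {G // G ∈ A (st v)}, (e (st v) G).1 = v then h.choose.1 else ∅
    have hg1 : ∀ s (G : {G // G ∈ A s}), g (e s G).1 = G.1 := by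
      intro s G
      rcases hev : e s G with ⟨v, hv⟩
      subst hv
      have h : ∃ G : {G // G ∈ A (st v)}, (e (st v) G).1 = v := ⟨G, by rw [hev]⟩
      have h2 : h.choose = G := by
        apply (e (st v)).injective
        apply Subtype.ext
        rw [h.choose_spec, hev]
      simp only [g]
      rw [dif_pos h, h2]
    have hg2 : ∀ v, g v = ∅ ∨ ∃ G : {G // G ∈ A (st v)}, (e (st v) G).1 = v ∧ g v = G.1 := by
      intro v
      by_cases h : ∃ G : {G // G ∈ A (st v)}, (e (st v) G).1 = v
      · obtain ⟨G, hG⟩ := h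
        right
        refine ⟨G, hG, ?_⟩
        rw [← hg1 _ G, hG]
      · left
        simp only [g]
        rw [dif_neg h]
    have hgF : ∀ v, g v ∈ F v := by
      intro v
      rcases hg2 v with h | ⟨G, -, h⟩
      · rw [h]; exact hempty v
      · rw [h, hFst]; exact (hA _ _ G.2).1
    have hug : ∀ r ∈ R, ∃! v : ν, r ∈ g v := by
      intro r hr
      obtain ⟨⟨s, G⟩, ⟨h1, h2⟩, h3⟩ := hu r hr
      refine ⟨(e s ⟨G, h1⟩).1, ?_, ?_⟩
      · simp only [hg1]; exact h2
      · intro w hw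
        rcases hg2 w with h | ⟨G', h, h'⟩
        · rw [h] at hw; simp at hw
        · have := h3 (st w, G'.1) ⟨G'.2, h' ▸ hw⟩
          obtain ⟨G', hG'⟩ := G'
          simp only [Prod.mk.injEq] at this
          obtain ⟨rfl, rfl⟩ := this
          exact h.symm
    refine ⟨g, hgF, hug, ?_⟩
    symm
    apply station_sum_aux st c cst hcst hc0 g
    · intro v w h1 h2
      obtain ⟨r, hr⟩ := Finset.nonempty_iff_ne_empty.mpr h1
      exact (hug r (hR v _ (hgF v) hr)).unique hr (h2 ▸ hr)
    · intro s
      ext G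
      simp only [Finset.mem_image, Finset.mem_filter, Finset.mem_univ, true_and]
      constructor
      · intro hG
        refine ⟨(e s ⟨G, hG⟩).1, ⟨(e s ⟨G, hG⟩).2, ?_⟩, hg1 _ _⟩
        rw [hg1]
        exact (hA s G hG).2
      · rintro ⟨v, ⟨rfl, h1⟩, rfl⟩
        rcases hg2 v with h | ⟨G', -, h'⟩
        · exact absurd h h1
        · rw [h']; exact G'.2
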